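/- Under the exponential decay assumption on γ, θ, h and boundedness assumptions, the Sobolev loss 𝓔(θ) = ∫₀^∞ (α₁|((γ−θ)*h)(t)|² + α₂|((γ−θ)*h)'(t)|²) e^{-2ωt} dt satisfies m_ω^h ‖θ−γ‖²_{L²(ρ)} ≤ 𝓔(θ) ≤ M_ω^h ‖θ−γ‖²_{L²(ρ)}, where ρ has density e^{-2ωt} on [0,∞). -/

import Mathlib

open MeasureTheory Complex Real

/-- Laplace transform of a real function on `[0,∞)`. -/
noncomputable def laplace (f : ℝ → ℝ) (z : ℂ) : ℂ :=
  ∫ t in Set.Ioi (0 : ℝ), (f t : ℂ) * Complex.exp (-z * t)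

/-- Causal convolution on `[0,∞)`. -/
noncomputable def conv (f h : ℝ → ℝ) (t : ℝ) : ℝ :=
  ∫ s in (0 : ℝ)..t, f (t - s) * h s

/-- Combined spectral weight `α₁|ĥ(z)|² + α₂|zĥ(z)|²` along the line `Re z = ω`. -/
noncomputable def specWeight (h : ℝ → ℝ) (α₁ α₂ ω τ : ℝ) : ℝ :=
  α₁ * ‖laplace h ((ω : ℂ) + τ * Complex.I)‖ ^ 2 +
    α₂ * ‖((ω : ℂ) + τ * Complex.I) * laplace h ((ω : ℂ) + τ * Complex.I)‖ ^ 2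

/-!
Damping a causal function by `e^{-ωt}` turns its Laplace transform on the line `Re z = ω` into a
Fourier transform. There the convolution `u = h * (γ - θ)` becomes the product `ĥ · (γ - θ)^`, and,
because `u 0 = 0`, its derivative becomes multiplication by `z`. Plancherel's theorem therefore
writes `2π` times the Sobolev loss as the integral over the line of the spectral weight of `h` times
`|(γ - θ)^|²`, while `2π ‖γ - θ‖²` is the same integral without the weight; bounding the weight by
its infimum and supremum gives both inequalities.
-/

section Fourier

open FourierTransform SchwartzMap
open scoped ContDiff

theorem lpNorm_two_sq {α F : Type*} [MeasurableSpace α] {μ : Measure α} [NormedAddCommGroup F]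
    {f : α → F} (hf : AEStronglyMeasurable f μ) : lpNorm f 2 μ ^ 2 = ∫ x, ‖f x‖ ^ 2 ∂μ := by
  rw [lpNorm_eq_integral_norm_rpow_toReal two_ne_zero ENNReal.ofNat_ne_top hf,
    ← Real.rpow_natCast, ← Real.rpow_mul (by positivity)]
  simp

variable {E F : Type*} [NormedAddCommGroup E] [InnerProductSpace ℝ E] [FiniteDimensional ℝ E]
  [MeasurableSpace E] [BorelSpace E]

theorem ae_eq_of_integral_schwartz_smul_eq [NormedAddCommGroup F] [NormedSpace ℂ F]
    [CompleteSpace F] {f g : E → F} (hf : LocallyIntegrable f) (hg : LocallyIntegrable g)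
    (h : ∀ φ : 𝓢(E, ℂ), ∫ x, φ x • f x = ∫ x, φ x • g x) : f =ᵐ[volume] g := by
  refine ae_eq_of_integral_contDiff_smul_eq hf hg fun φ hφ hφc ↦ ?_
  have hψc : HasCompactSupport (ofRealCLM ∘ φ) := hφc.comp_left rfl
  have hψ : ContDiff ℝ ∞ (ofRealCLM ∘ φ) := by fun_prop
  simpa using h (hψc.toSchwartzMap hψ)

section NormedSpace

variable [NormedAddCommGroup F] [NormedSpace ℂ F] {f : E → F}

theorem continuous_fourier (hf : Integrable f) : Continuous (𝓕 f) :=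
  VectorFourier.fourierIntegral_continuous Real.continuous_fourierChar
    (L := innerₗ E) continuous_inner hf

theorem norm_fourier_le_integral_norm (f : E → F) (ξ : E) : ‖𝓕 f ξ‖ ≤ ∫ x, ‖f x‖ :=
  VectorFourier.norm_fourierIntegral_le_integral_norm _ _ _ _ _

theorem memLp_top_fourier (hf : Integrable f) : MemLp (𝓕 f) ⊤ :=
  memLp_top_of_bound (continuous_fourier hf).aestronglyMeasurable _
    (.of_forall (norm_fourier_le_integral_norm f))

theorem integral_schwartz_fourier_smul_eq [CompleteSpace F] (hf : Integrable f) (φ : 𝓢(E, ℂ)) :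
    ∫ x, 𝓕 φ x • f x = ∫ x, φ x • 𝓕 f x := by
  have := VectorFourier.integral_fourierIntegral_smul_eq_flip (L := innerₗ E)
    Real.continuous_fourierChar continuous_inner (φ.integrable (μ := volume)) hf
  rwa [flip_innerₗ] at this

end NormedSpace

variable [NormedAddCommGroup F] [InnerProductSpace ℂ F] [CompleteSpace F] {f : E → F}

theorem fourier_toLp_ae_eq (hf : Integrable f) (hf2 : MemLp f 2) :
    (𝓕 (hf2.toLp f) : Lp F 2 (volume : Measure E)) =ᵐ[volume] 𝓕 f := by
  refine ae_eq_of_integral_schwartz_smul_eq ((Lp.memLp _).locallyIntegrable one_le_two)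
    (continuous_fourier hf).locallyIntegrable fun φ ↦ ?_
  calc ∫ x, φ x • (𝓕 (hf2.toLp f) : Lp F 2 (volume : Measure E)) x
      = ∫ x, 𝓕 φ x • hf2.toLp f x := by
        simpa using congr($(Lp.fourier_toTemperedDistribution_eq (hf2.toLp f)) φ).symm
    _ = ∫ x, 𝓕 φ x • f x := integral_congr_ae <| by
        filter_upwards [hf2.coeFn_toLp] with x hx using by rw [hx]
    _ = ∫ x, φ x • 𝓕 f x := integral_schwartz_fourier_smul_eq hf φ

theorem fourierInv_toLp_fourier_ae_eq (hf : Integrable f) (hf2 : MemLp (𝓕 f) 2) :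
    (𝓕⁻ (hf2.toLp (𝓕 f)) : Lp F 2 (volume : Measure E)) =ᵐ[volume] f := by
  refine ae_eq_of_integral_schwartz_smul_eq ((Lp.memLp _).locallyIntegrable one_le_two)
    hf.locallyIntegrable fun φ ↦ ?_
  calc ∫ x, φ x • (𝓕⁻ (hf2.toLp (𝓕 f)) : Lp F 2 (volume : Measure E)) x
      = ∫ x, 𝓕⁻ φ x • hf2.toLp (𝓕 f) x := by
        simpa using congr($(Lp.fourierInv_toTemperedDistribution_eq (hf2.toLp (𝓕 f))) φ).symm
    _ = ∫ x, 𝓕⁻ φ x • 𝓕 f x := integral_congr_ae <| by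
        filter_upwards [hf2.coeFn_toLp] with x hx using by rw [hx]
    _ = ∫ x, φ x • f x := by
        rw [← integral_schwartz_fourier_smul_eq hf, FourierTransform.fourier_fourierInv_eq]

theorem memLp_two_fourier_iff (hf : Integrable f) : MemLp (𝓕 f) 2 ↔ MemLp f 2 :=
  ⟨fun h ↦ (memLp_congr_ae (fourierInv_toLp_fourier_ae_eq hf h)).1 (Lp.memLp _),
    fun h ↦ (memLp_congr_ae (fourier_toLp_ae_eq hf h)).1 (Lp.memLp _)⟩

theorem integral_norm_sq_fourier (hf : Integrable f) (hf2 : MemLp f 2) :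
    ∫ ξ, ‖𝓕 f ξ‖ ^ 2 = ∫ x, ‖f x‖ ^ 2 := by
  have hfourier := ((memLp_two_fourier_iff hf).2 hf2).aestronglyMeasurable
  have hnorm : lpNorm (𝓕 f) 2 volume = lpNorm f 2 volume := by
    rw [← toReal_eLpNorm hfourier, ← toReal_eLpNorm hf2.aestronglyMeasurable,
      ← eLpNorm_congr_ae (fourier_toLp_ae_eq hf hf2), ← eLpNorm_congr_ae hf2.coeFn_toLp,
      ← Lp.norm_def, ← Lp.norm_def, Lp.norm_fourier_eq]
  rw [← lpNorm_two_sq hfourier, ← lpNorm_two_sq hf2.aestronglyMeasurable, hnorm]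

-- On the Fourier side the convolution is an `L²` function times a bounded one.
theorem memLp_two_convolution {f g : E → ℂ} (hf : Integrable f) (hf2 : MemLp f 2)
    (hg : Integrable g) : MemLp (convolution f g (ContinuousLinearMap.mul ℂ ℂ)) 2 := by
  rw [← memLp_two_fourier_iff (hf.integrable_convolution _ hg),
    funext (Real.fourier_mul_convolution_eq hf hg)]
  exact (memLp_top_fourier hg).mul ((memLp_two_fourier_iff hf).2 hf2)

end Fourier

section Leibniz

variable {E : Type*} [NormedAddCommGroup E] [NormedSpace ℝ E] {f f' : ℝ → ℝ → E}

theorem hasDerivAt_intervalIntegral_param (a b : ℝ) (hf : ∀ x, Continuous (f x))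
    (hf' : Continuous ↿f') (hff' : ∀ x s, HasDerivAt (f · s) (f' x s) x) (x₀ : ℝ) :
    HasDerivAt (fun x ↦ ∫ s in a..b, f x s) (∫ s in a..b, f' x₀ s) x₀ := by
  obtain ⟨K, hK⟩ := ((isCompact_closedBall x₀ 1).prod isCompact_uIcc).exists_bound_of_continuousOn
    (s := Metric.closedBall x₀ 1 ×ˢ Set.uIcc a b) hf'.continuousOn
  refine (intervalIntegral.hasDerivAt_integral_of_dominated_loc_of_deriv_le
    (bound := fun _ ↦ K) (Metric.closedBall_mem_nhds x₀ one_pos)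
    (.of_forall fun x ↦ (hf x).aestronglyMeasurable) ((hf x₀).intervalIntegrable a b)
    (hf'.uncurry_left x₀).aestronglyMeasurable ?_ intervalIntegrable_const
    (.of_forall fun s _ x _ ↦ hff' x s)).2
  exact .of_forall fun s hs x hx ↦ hK (x, s) ⟨hx, Set.uIoc_subset_uIcc hs⟩

-- Chain rule along the diagonal for `(x, y) ↦ ∫ s in a..y, f x s`.
theorem hasDerivAt_intervalIntegral_param_right [CompleteSpace E] (a : ℝ) (hf : Continuous ↿f)
    (hf' : Continuous ↿f') (hff' : ∀ x s, HasDerivAt (f · s) (f' x s) x) (x₀ : ℝ) :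
    HasDerivAt (fun x ↦ ∫ s in a..x, f x s) (f x₀ x₀ + ∫ s in a..x₀, f' x₀ s) x₀ := by
  have hpartial := hasStrictFDerivAt_uncurry_coprod (𝕜 := ℝ) (u := (x₀, x₀))
    (f := fun x y ↦ ∫ s in a..y, f x s)
    (f₁ := fun x y ↦ .toSpanSingleton ℝ (∫ s in a..y, f' x s))
    (f₂ := fun x y ↦ .toSpanSingleton ℝ (f x y))
    (.of_forall fun p ↦ (hasDerivAt_intervalIntegral_param a p.2
      (fun x ↦ hf.uncurry_left x) hf' hff' p.1).hasFDerivAt)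
    (.of_forall fun p ↦ (((hf.uncurry_left p.1).integral_hasStrictDerivAt a
      p.2).hasDerivAt.hasFDerivAt))
    ((ContinuousLinearMap.toSpanSingletonLIE ℝ E).continuous.comp
      (intervalIntegral.continuous_parametric_primitive_of_continuous hf')).continuousAt
    ((ContinuousLinearMap.toSpanSingletonLIE ℝ E).continuous.comp hf).continuousAt
  have hdiag := hpartial.hasFDerivAt.comp_hasDerivAt (f := fun x ↦ (x, x)) x₀
    ((hasDerivAt_id x₀).prodMk (hasDerivAt_id x₀))
  convert! hdiag using 1
  simp [Function.HasUncurry.uncurry, add_comm]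

end Leibniz

section Conv

variable {f g : ℝ → ℝ}

theorem conv_comm (f g : ℝ → ℝ) : conv f g = conv g f := by
  funext t
  simpa [conv, mul_comm] using
    (intervalIntegral.integral_comp_sub_left (a := 0) (b := t) (fun s ↦ f s * g (t - s)) t)

theorem conv_zero_right (f g : ℝ → ℝ) : conv f g 0 = 0 := intervalIntegral.integral_same

theorem hasDerivAt_conv (hf : ContDiff ℝ 1 f) (hg : Continuous g) (t : ℝ) :
    HasDerivAt (conv f g) (f 0 * g t + conv (deriv f) g t) t := by
  have : Continuous (deriv f) := hf.continuous_deriv_one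
  have hparam (x s : ℝ) : HasDerivAt (fun x ↦ f (x - s) * g s) (deriv f (x - s) * g s) x :=
    ((hf.differentiable one_ne_zero _).hasDerivAt.comp_sub_const x s).mul_const _
  simpa [conv] using! hasDerivAt_intervalIntegral_param_right 0
    (f := fun x s ↦ f (x - s) * g s) (f' := fun x s ↦ deriv f (x - s) * g s)
    (by fun_prop) (by fun_prop) hparam t

end Conv

section Damped

open Set FourierTransform

/-- The causal, exponentially damped function `t ↦ f t * e^{-ωt}` for `t > 0`, extended by zero to
the whole line so that its Fourier transform is the Laplace transform of `f` on `Re z = ω`. -/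
noncomputable def damped (ω : ℝ) (f : ℝ → ℝ) : ℝ → ℂ :=
  (Ioi 0).indicator fun t ↦ (f t : ℂ) * cexp (-ω * t)

variable {f g f' : ℝ → ℝ} {ω : ℝ}

theorem norm_damped_sq (ω : ℝ) (f : ℝ → ℝ) (t : ℝ) :
    ‖damped ω f t‖ ^ 2 = (Ioi 0).indicator (fun t ↦ f t ^ 2 * rexp (-2 * ω * t)) t := by
  by_cases ht : t ∈ Ioi 0
  · have hexp : rexp (-(ω * t)) ^ 2 = rexp (-2 * ω * t) := by
      rw [← Real.exp_nat_mul]; congr 1; push_cast; ring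
    simp [damped, ht, Complex.norm_exp, mul_pow, hexp]
  · simp [damped, ht]

theorem integral_norm_damped_sq (ω : ℝ) (f : ℝ → ℝ) :
    ∫ t, ‖damped ω f t‖ ^ 2 = ∫ t in Ioi 0, f t ^ 2 * rexp (-2 * ω * t) := by
  simp only [norm_damped_sq, integral_indicator measurableSet_Ioi]

theorem integrableOn_sq_mul_exp (hf : MemLp (damped ω f) 2) :
    IntegrableOn (fun t ↦ f t ^ 2 * rexp (-2 * ω * t)) (Ioi 0) := by
  have := hf.integrable_norm_pow two_ne_zero
  simpa only [ENNReal.toReal_ofNat, norm_damped_sq,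
    integrable_indicator_iff measurableSet_Ioi] using! this

theorem fourierChar_smul_damped (f : ℝ → ℝ) (z : ℂ) (t : ℝ) :
    𝐞 (-(t * (z.im / (2 * π)))) • damped z.re f t =
      (Ioi 0).indicator (fun t : ℝ ↦ (f t : ℂ) * cexp (-z * t)) t := by
  by_cases ht : t ∈ Ioi 0
  · rw [damped, indicator_of_mem ht, indicator_of_mem ht, Circle.smul_def, fourierChar_apply,
      smul_eq_mul, mul_left_comm, ← Complex.exp_add]
    congr 2
    nth_rw 3 [← re_add_im z]
    push_cast
    field_simp
    ring
  · simp [damped, ht]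

theorem laplace_eq_fourier_damped (f : ℝ → ℝ) (z : ℂ) :
    laplace f z = 𝓕 (damped z.re f) (z.im / (2 * π)) := by
  simp only [Real.fourier_real_eq, fourierChar_smul_damped, laplace,
    integral_indicator measurableSet_Ioi]

theorem integrableOn_mul_cexp {z : ℂ} (hf : Integrable (damped z.re f)) :
    IntegrableOn (fun t : ℝ ↦ (f t : ℂ) * cexp (-z * t)) (Ioi 0) := by
  have := (Real.fourierIntegral_convergent_iff (z.im / (2 * π))).2 hf
  simpa only [RCLike.inner_apply, conj_trivial, mul_comm (z.im / _), fourierChar_smul_damped,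
    integrable_indicator_iff measurableSet_Ioi] using this

theorem norm_laplace_le (f : ℝ → ℝ) (z : ℂ) : ‖laplace f z‖ ≤ ∫ t, ‖damped z.re f t‖ := by
  rw [laplace_eq_fourier_damped]
  exact norm_fourier_le_integral_norm _ _

theorem laplace_deriv {z : ℂ} (hff' : ∀ t, HasDerivAt f (f' t) t)
    (hf : Integrable (damped z.re f)) (hf' : Integrable (damped z.re f')) :
    laplace f' z = z * laplace f z - f 0 := by
  have hderiv (t : ℝ) : HasDerivAt (fun t : ℝ ↦ (f t : ℂ) * cexp (-z * t))
      (f' t * cexp (-z * t) - z * (f t * cexp (-z * t))) t := by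
    have hexp : HasDerivAt (fun t : ℝ ↦ cexp (-z * t)) (cexp (-z * t) * (-z * 1)) t :=
      ((hasDerivAt_id t).ofReal_comp.const_mul (-z)).cexp
    exact ((hff' t).ofReal_comp.mul hexp).congr_deriv (by ring)
  have hint := integrableOn_mul_cexp hf
  have hint' := integrableOn_mul_cexp hf'
  have hlim := tendsto_zero_of_hasDerivAt_of_integrableOn_Ioi (fun t _ ↦ hderiv t)
    (hint'.sub (hint.const_mul z)) hint
  have hftc := integral_Ioi_of_hasDerivAt_of_tendsto' (fun t _ ↦ hderiv t)
    (hint'.sub (hint.const_mul z)) hlim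
  rw [integral_sub hint' (hint.const_mul z), integral_const_mul, ← laplace, ← laplace, ofReal_zero,
    mul_zero, Complex.exp_zero, mul_one] at hftc
  linear_combination hftc

theorem norm_mul_laplace_le {z : ℂ} (hff' : ∀ t, HasDerivAt f (f' t) t)
    (hf : Integrable (damped z.re f)) (hf' : Integrable (damped z.re f')) :
    ‖z * laplace f z‖ ≤ (∫ t, ‖damped z.re f' t‖) + |f 0| :=
  calc ‖z * laplace f z‖ = ‖laplace f' z + f 0‖ := by
        rw [laplace_deriv hff' hf hf', sub_add_cancel]
    _ ≤ ‖laplace f' z‖ + ‖(f 0 : ℂ)‖ := norm_add_le _ _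
    _ ≤ (∫ t, ‖damped z.re f' t‖) + |f 0| := by
        rw [norm_real, Real.norm_eq_abs]
        gcongr
        exact norm_laplace_le f' z

theorem laplace_vertical (f : ℝ → ℝ) (ω τ : ℝ) :
    laplace f (ω + τ * I) = 𝓕 (damped ω f) (τ / (2 * π)) := by
  simp [laplace_eq_fourier_damped]

theorem integrable_norm_sq_laplace (hf : Integrable (damped ω f)) (hf2 : MemLp (damped ω f) 2) :
    Integrable fun τ : ℝ ↦ ‖laplace f (ω + τ * I)‖ ^ 2 := by
  simp only [laplace_vertical]
  exact (((memLp_two_fourier_iff hf).2 hf2).integrable_norm_pow two_ne_zero).comp_div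
    two_pi_pos.ne'

theorem integral_norm_sq_laplace (hf : Integrable (damped ω f)) (hf2 : MemLp (damped ω f) 2) :
    ∫ τ : ℝ, ‖laplace f (ω + τ * I)‖ ^ 2 =
      2 * π * ∫ t in Ioi 0, f t ^ 2 * rexp (-2 * ω * t) := by
  simp only [laplace_vertical]
  rw [Measure.integral_comp_div (fun ξ ↦ ‖𝓕 (damped ω f) ξ‖ ^ 2), abs_of_pos two_pi_pos,
    smul_eq_mul, integral_norm_sq_fourier hf hf2, integral_norm_damped_sq]

theorem damped_conv (ω : ℝ) (f g : ℝ → ℝ) :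
    damped ω (conv f g) =
      convolution (damped ω g) (damped ω f) (ContinuousLinearMap.mul ℂ ℂ) := by
  have hexp (s t : ℝ) : cexp (-ω * s) * cexp (-ω * (t - s : ℝ)) = cexp (-ω * t) := by
    rw [← Complex.exp_add]; congr 1; push_cast; ring
  refine .trans ?_ (posConvolution_eq_convolution_indicator _ _ (ContinuousLinearMap.mul ℝ ℂ))
  refine indicator_congr fun t _ ↦ ?_
  simp only [conv, ← intervalIntegral.integral_ofReal, ← intervalIntegral.integral_mul_const]
  refine intervalIntegral.integral_congr fun s _ ↦ ?_
  simp only [ContinuousLinearMap.mul_apply', ← hexp s t]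
  push_cast; ring

theorem integrable_damped_conv (hf : Integrable (damped ω f)) (hg : Integrable (damped ω g)) :
    Integrable (damped ω (conv f g)) := by
  rw [damped_conv]
  exact hg.integrable_convolution _ hf

theorem memLp_two_damped_conv (hf : Integrable (damped ω f)) (hg : Integrable (damped ω g))
    (hg2 : MemLp (damped ω g) 2) : MemLp (damped ω (conv f g)) 2 := by
  rw [damped_conv]
  exact memLp_two_convolution hg hg2 hf

theorem laplace_conv {z : ℂ} (hf : Integrable (damped z.re f)) (hg : Integrable (damped z.re g)) :
    laplace (conv f g) z = laplace f z * laplace g z := by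
  rw [mul_comm]
  simp only [laplace_eq_fourier_damped, damped_conv, Real.fourier_mul_convolution_eq hg hf]

theorem damped_deriv_conv (ω : ℝ) (hf : ContDiff ℝ 1 f) (hg : Continuous g) :
    damped ω (deriv (conv f g)) = (f 0 : ℂ) • damped ω g + damped ω (conv (deriv f) g) := by
  funext t
  by_cases ht : t ∈ Ioi 0
  · simp only [damped, Pi.add_apply, Pi.smul_apply, indicator_of_mem ht, smul_eq_mul,
      (hasDerivAt_conv hf hg t).deriv, ofReal_add, ofReal_mul]
    ring
  · simp [damped, ht]

theorem integrable_damped_deriv_conv (hf : ContDiff ℝ 1 f) (hg : Continuous g)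
    (hf' : Integrable (damped ω (deriv f))) (hgi : Integrable (damped ω g)) :
    Integrable (damped ω (deriv (conv f g))) := by
  rw [damped_deriv_conv ω hf hg]
  exact (hgi.smul _).add (integrable_damped_conv hf' hgi)

theorem memLp_two_damped_deriv_conv (hf : ContDiff ℝ 1 f) (hg : Continuous g)
    (hf' : Integrable (damped ω (deriv f))) (hgi : Integrable (damped ω g))
    (hg2 : MemLp (damped ω g) 2) : MemLp (damped ω (deriv (conv f g))) 2 := by
  rw [damped_deriv_conv ω hf hg]
  exact (hg2.const_smul _).add (memLp_two_damped_conv hf' hgi hg2)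

theorem memLp_exp_mul_Ioi {p : ENNReal} (hp0 : p ≠ 0) (hp : p ≠ ⊤) {a : ℝ} (ha : a < 0) (c : ℝ) :
    MemLp (fun t ↦ rexp (a * t)) p (volume.restrict (Ioi c)) := by
  rw [← integrable_norm_rpow_iff (by fun_prop) hp0 hp]
  have hpa : a * p.toReal < 0 := mul_neg_of_neg_of_pos ha (ENNReal.toReal_pos hp0 hp)
  refine (integrableOn_exp_mul_Ioi hpa c).congr_fun (fun t _ ↦ ?_) measurableSet_Ioi
  rw [Real.norm_eq_abs, Real.abs_exp, ← Real.exp_mul, mul_right_comm]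

theorem memLp_damped {p : ENNReal} (hp0 : p ≠ 0) (hp : p ≠ ⊤) {C σ : ℝ} (hσω : 0 < σ + ω)
    (hf : Continuous f) (hfb : ∀ t, 0 ≤ t → |f t| ≤ C * rexp (-σ * t)) :
    MemLp (damped ω f) p := by
  rw [damped, memLp_indicator_iff_restrict measurableSet_Ioi]
  refine ((memLp_exp_mul_Ioi hp0 hp (neg_lt_zero.2 hσω) 0).const_mul C).mono'
    (by fun_prop) (ae_restrict_of_forall_mem measurableSet_Ioi fun t ht ↦ ?_)
  have hexp : rexp (-(σ + ω) * t) = rexp (-σ * t) * rexp (-ω * t) := by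
    rw [← Real.exp_add]; congr 1; ring
  rw [norm_mul, norm_real, Real.norm_eq_abs, Complex.norm_exp, hexp, ← mul_assoc]
  simpa using mul_le_mul_of_nonneg_right (hfb t (le_of_lt ht)) (Real.exp_nonneg (-ω * t))

theorem integrable_damped {C σ : ℝ} (hσω : 0 < σ + ω) (hf : Continuous f)
    (hfb : ∀ t, 0 ≤ t → |f t| ≤ C * rexp (-σ * t)) : Integrable (damped ω f) :=
  memLp_one_iff_integrable.1 (memLp_damped one_ne_zero ENNReal.one_ne_top hσω hf hfb)

end Damped

section SpectralWeight

open Set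

variable {f g u : ℝ → ℝ} {ω : ℝ}

/-- The energy `∫₀^∞ (α₁ u² + α₂ u'²) e^{-2ωt} dt` of a real function; the Sobolev loss of `θ` is
the energy of `conv (γ - θ) h`. -/
noncomputable def sobolevEnergy (α₁ α₂ ω : ℝ) (u : ℝ → ℝ) : ℝ :=
  ∫ t in Ioi (0 : ℝ), (α₁ * u t ^ 2 + α₂ * deriv u t ^ 2) * rexp (-2 * ω * t)

theorem isBounded_range_specWeight (α₁ α₂ : ℝ) (hf : Differentiable ℝ f)
    (hfi : Integrable (damped ω f)) (hfi' : Integrable (damped ω (deriv f))) :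
    Bornology.IsBounded (range (specWeight f α₁ α₂ ω)) := by
  refine isBounded_iff_forall_norm_le.2 ⟨|α₁| * (∫ t, ‖damped ω f t‖) ^ 2 +
    |α₂| * ((∫ t, ‖damped ω (deriv f) t‖) + |f 0|) ^ 2, ?_⟩
  rintro _ ⟨τ, rfl⟩
  obtain ⟨z, hz, rfl⟩ : ∃ z : ℂ, ω + τ * I = z ∧ z.re = ω := ⟨_, rfl, by simp⟩
  rw [specWeight, hz]
  refine (norm_add_le _ _).trans ?_
  rw [norm_mul α₁, norm_mul α₂, norm_pow, norm_pow, norm_norm, norm_norm, Real.norm_eq_abs,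
    Real.norm_eq_abs]
  gcongr
  · exact norm_laplace_le f z
  · exact norm_mul_laplace_le (fun t ↦ (hf t).hasDerivAt) hfi hfi'

theorem specWeight_conv (α₁ α₂ τ : ℝ) (hf : Integrable (damped ω f))
    (hg : Integrable (damped ω g)) :
    specWeight (conv f g) α₁ α₂ ω τ =
      specWeight f α₁ α₂ ω τ * ‖laplace g (ω + τ * I)‖ ^ 2 := by
  obtain ⟨z, hz, rfl⟩ : ∃ z : ℂ, ω + τ * I = z ∧ z.re = ω := ⟨_, rfl, by simp⟩
  rw [specWeight, specWeight, hz, laplace_conv hf hg, ← mul_assoc, norm_mul, norm_mul (z * _)]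
  ring

theorem specWeight_eq_laplace_deriv (α₁ α₂ τ : ℝ) (hu : Differentiable ℝ u) (hu0 : u 0 = 0)
    (hui : Integrable (damped ω u)) (hui' : Integrable (damped ω (deriv u))) :
    specWeight u α₁ α₂ ω τ = α₁ * ‖laplace u (ω + τ * I)‖ ^ 2 +
      α₂ * ‖laplace (deriv u) (ω + τ * I)‖ ^ 2 := by
  obtain ⟨z, hz, rfl⟩ : ∃ z : ℂ, ω + τ * I = z ∧ z.re = ω := ⟨_, rfl, by simp⟩
  rw [specWeight, hz, laplace_deriv (fun t ↦ (hu t).hasDerivAt) hui hui', hu0, ofReal_zero,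
    sub_zero]

theorem integrable_specWeight (α₁ α₂ : ℝ) (hu : Differentiable ℝ u) (hu0 : u 0 = 0)
    (hui : Integrable (damped ω u)) (hu2 : MemLp (damped ω u) 2)
    (hui' : Integrable (damped ω (deriv u))) (hu2' : MemLp (damped ω (deriv u)) 2) :
    Integrable (specWeight u α₁ α₂ ω) := by
  refine (((integrable_norm_sq_laplace hui hu2).const_mul α₁).add
    ((integrable_norm_sq_laplace hui' hu2').const_mul α₂)).congr (.of_forall fun τ ↦ ?_)
  exact (specWeight_eq_laplace_deriv α₁ α₂ τ hu hu0 hui hui').symm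

theorem integral_specWeight (α₁ α₂ : ℝ) (hu : Differentiable ℝ u) (hu0 : u 0 = 0)
    (hui : Integrable (damped ω u)) (hu2 : MemLp (damped ω u) 2)
    (hui' : Integrable (damped ω (deriv u))) (hu2' : MemLp (damped ω (deriv u)) 2) :
    ∫ τ, specWeight u α₁ α₂ ω τ = 2 * π * sobolevEnergy α₁ α₂ ω u := by
  simp only [specWeight_eq_laplace_deriv α₁ α₂ _ hu hu0 hui hui', sobolevEnergy, add_mul,
    mul_assoc α₁, mul_assoc α₂]
  rw [integral_add ((integrable_norm_sq_laplace hui hu2).const_mul α₁)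
      ((integrable_norm_sq_laplace hui' hu2').const_mul α₂),
    integral_add ((integrableOn_sq_mul_exp hu2).const_mul α₁)
      ((integrableOn_sq_mul_exp hu2').const_mul α₂)]
  simp only [integral_const_mul, integral_norm_sq_laplace hui hu2,
    integral_norm_sq_laplace hui' hu2']
  ring

end SpectralWeight

theorem ciInf_mul_integral_le {α : Type*} [MeasurableSpace α] {μ : Measure α} {w g : α → ℝ}
    (hw : BddBelow (Set.range w)) (hg : Integrable g μ) (hwg : Integrable (fun x ↦ w x * g x) μ)
    (hg0 : 0 ≤ g) : (⨅ x, w x) * ∫ x, g x ∂μ ≤ ∫ x, w x * g x ∂μ := by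
  rw [← integral_const_mul]
  exact integral_mono (hg.const_mul _) hwg fun x ↦
    mul_le_mul_of_nonneg_right (ciInf_le hw x) (hg0 x)

theorem integral_le_ciSup_mul_integral {α : Type*} [MeasurableSpace α] {μ : Measure α}
    {w g : α → ℝ} (hw : BddAbove (Set.range w)) (hg : Integrable g μ)
    (hwg : Integrable (fun x ↦ w x * g x) μ) (hg0 : 0 ≤ g) :
    ∫ x, w x * g x ∂μ ≤ (⨆ x, w x) * ∫ x, g x ∂μ := by
  rw [← integral_const_mul]
  exact integral_mono hwg (hg.const_mul _) fun x ↦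
    mul_le_mul_of_nonneg_right (le_ciSup hw x) (hg0 x)

theorem sobolev_loss_coercivity_general {d h : ℝ → ℝ} {ω : ℝ} (α₁ α₂ : ℝ)
    (hd : Continuous d) (hdi : Integrable (damped ω d)) (hd2 : MemLp (damped ω d) 2)
    (hh : ContDiff ℝ 1 h) (hhi : Integrable (damped ω h))
    (hhi' : Integrable (damped ω (deriv h))) :
    (⨅ τ : ℝ, specWeight h α₁ α₂ ω τ) * (∫ t in Set.Ioi 0, d t ^ 2 * rexp (-2 * ω * t)) ≤
        sobolevEnergy α₁ α₂ ω (conv d h) ∧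
      sobolevEnergy α₁ α₂ ω (conv d h) ≤
        (⨆ τ : ℝ, specWeight h α₁ α₂ ω τ) * ∫ t in Set.Ioi 0, d t ^ 2 * rexp (-2 * ω * t) := by
  rw [conv_comm d h]
  have hw := isBounded_range_specWeight α₁ α₂ (hh.differentiable one_ne_zero) hhi hhi'
  have hu : Differentiable ℝ (conv h d) := fun t ↦ (hasDerivAt_conv hh hd t).differentiableAt
  have hui := integrable_damped_conv hhi hdi
  have hu2 := memLp_two_damped_conv hhi hdi hd2
  have hui' := integrable_damped_deriv_conv hh hd hhi' hdi
  have hu2' := memLp_two_damped_deriv_conv hh hd hhi' hdi hd2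
  have hint := integrable_specWeight α₁ α₂ hu (conv_zero_right h d) hui hu2 hui' hu2'
  have henergy := integral_specWeight α₁ α₂ hu (conv_zero_right h d) hui hu2 hui' hu2'
  simp only [funext fun τ ↦ specWeight_conv α₁ α₂ τ hhi hdi] at hint henergy
  have hdhat := integrable_norm_sq_laplace hdi hd2
  have hlower := ciInf_mul_integral_le hw.bddBelow hdhat hint fun _ ↦ sq_nonneg _
  have hupper := integral_le_ciSup_mul_integral hw.bddAbove hdhat hint fun _ ↦ sq_nonneg _
  rw [henergy, integral_norm_sq_laplace hdi hd2, mul_left_comm] at hlower hupper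
  exact ⟨le_of_mul_le_mul_left hlower two_pi_pos, le_of_mul_le_mul_left hupper two_pi_pos⟩

/-- **Coercivity of the Sobolev loss.** With `m_ω^h = inf`, `M_ω^h = sup` of the
spectral weight of `h` on the line `Re z = ω`, the Sobolev loss
`𝓔(θ) = ∫₀^∞ (α₁|((γ−θ)*h)(t)|² + α₂|((γ−θ)*h)'(t)|²) e^{-2ωt} dt` satisfies
`m_ω^h ‖θ−γ‖²_{L²(ρ)} ≤ 𝓔(θ) ≤ M_ω^h ‖θ−γ‖²_{L²(ρ)}`. -/
theorem sobolev_loss_coercivity (γ θ h : ℝ → ℝ) (C σ α₁ α₂ ω : ℝ)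
    (hC : 0 < C) (hσ : 0 < σ) (hα₁ : 0 < α₁) (hα₂ : 0 < α₂) (hα : α₁ + α₂ = 1)
    (hω : 0 < ω)
    (hsmoothγ : ContDiff ℝ (⊤ : ℕ∞) γ) (hsmoothθ : ContDiff ℝ (⊤ : ℕ∞) θ) (hsmoothh : ContDiff ℝ (⊤ : ℕ∞) h)
    (hdecayγ : ∀ t : ℝ, 0 ≤ t → |γ t| ≤ C * Real.exp (-σ * t))
    (hdecayθ : ∀ t : ℝ, 0 ≤ t → |θ t| ≤ C * Real.exp (-σ * t))
    (hdecayh : ∀ t : ℝ, 0 ≤ t → |h t| ≤ C * Real.exp (-σ * t))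
    (hdecayγ' : ∀ t : ℝ, 0 ≤ t → |deriv γ t| ≤ C * Real.exp (-σ * t))
    (hdecayθ' : ∀ t : ℝ, 0 ≤ t → |deriv θ t| ≤ C * Real.exp (-σ * t))
    (hdecayh' : ∀ t : ℝ, 0 ≤ t → |deriv h t| ≤ C * Real.exp (-σ * t))
    (hm : 0 < ⨅ τ : ℝ, specWeight h α₁ α₂ ω τ)
    (hM : BddAbove (Set.range fun τ : ℝ => specWeight h α₁ α₂ ω τ)) :
    (⨅ τ : ℝ, specWeight h α₁ α₂ ω τ) *
        (∫ t in Set.Ioi (0 : ℝ), (θ t - γ t) ^ 2 * Real.exp (-2 * ω * t))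
      ≤ (∫ t in Set.Ioi (0 : ℝ),
          (α₁ * (conv (fun s => γ s - θ s) h t) ^ 2 +
            α₂ * (deriv (conv (fun s => γ s - θ s) h) t) ^ 2) * Real.exp (-2 * ω * t)) ∧
    (∫ t in Set.Ioi (0 : ℝ),
          (α₁ * (conv (fun s => γ s - θ s) h t) ^ 2 +
            α₂ * (deriv (conv (fun s => γ s - θ s) h) t) ^ 2) * Real.exp (-2 * ω * t))
      ≤ (⨆ τ : ℝ, specWeight h α₁ α₂ ω τ) *
        (∫ t in Set.Ioi (0 : ℝ), (θ t - γ t) ^ 2 * Real.exp (-2 * ω * t)) := by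
  have hσω : 0 < σ + ω := add_pos hσ hω
  have hd : Continuous fun t ↦ γ t - θ t := hsmoothγ.continuous.sub hsmoothθ.continuous
  have hdecay (t : ℝ) (ht : 0 ≤ t) : |γ t - θ t| ≤ (C + C) * rexp (-σ * t) := by
    rw [add_mul]
    exact (abs_sub _ _).trans (add_le_add (hdecayγ t ht) (hdecayθ t ht))
  have hh : ContDiff ℝ 1 h := hsmoothh.of_le (by exact_mod_cast le_top)
  simp only [sub_sq_comm (θ _)]
  exact sobolev_loss_coercivity_general α₁ α₂ hd (integrable_damped hσω hd hdecay)
    (memLp_damped two_ne_zero ENNReal.ofNat_ne_top hσω hd hdecay) hh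
    (integrable_damped hσω hh.continuous hdecayh)
    (integrable_damped hσω hh.continuous_deriv_one hdecayh')
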